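/- Let X be a complete separable metric space, let k, ℓ > 0 be real numbers, δ₀ > 0, and C₁, C₂ ≥ 0. For each δ ∈ (0, δ₀] let μ₁^δ and μ₂^δ be probability measures on X such that: the support of μ₂^δ is nonempty with diameter at most C₁·δ^ℓ; μ₁^δ is absolutely continuous with respect to μ₂^δ; and the Radon–Nikodym derivative satisfies |(dμ₁^δ/dμ₂^δ)(x) − 1| ≤ C₂·δ^k for μ₂^δ-almost every x. Then there exists a constant C > 0 (one may take C = C₁·C₂) such that for every δ ∈ (0, δ₀] and every probability measure μ on X with finite first moment, |W₁(μ, μ₁^δ) − W₁(μ, μ₂^δ)| ≤ C·δ^{k+ℓ}. -/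

import Mathlib

open MeasureTheory Set

/-- The 1-Wasserstein distance: infimum over couplings of the integral of the distance. -/
noncomputable def W1 {X : Type*} [MeasurableSpace X] [PseudoMetricSpace X]
    (μ ν : Measure X) : ℝ :=
  sInf { c : ℝ | ∃ π : Measure (X × X), IsProbabilityMeasure π ∧
      π.map Prod.fst = μ ∧ π.map Prod.snd = ν ∧ c = ∫ p, dist p.1 p.2 ∂π }

/-- The topological support of a measure: points all of whose neighbourhoods have positive
measure. -/
def msupport {X : Type*} [TopologicalSpace X] [MeasurableSpace X] (μ : Measure X) : Set X :=
  {x | ∀ U ∈ nhds x, 0 < μ U}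

/-!
If a measure `α` lies below both `ν₁` and `ν₂`, then a coupling of `μ` and `ν₁` can be turned into
one of `μ` and `ν₂` by rerouting only the mass `1 - α(X)` that arrives outside `α`. The rerouted
mass still lands in a set `S` carrying both measures, so by the triangle inequality its cost goes
up by at most `diam S` per unit of mass. A density `dν₁/dν₂ ≥ 1 - ε` makes `α = (1 - ε) ν₂` such a
common minorant, which bounds the difference of the two Wasserstein distances by `ε * diam S`.
-/

open scoped ENNReal

section Minorant

variable {Ω Ω' : Type*} [MeasurableSpace Ω] [MeasurableSpace Ω']

lemma rnDeriv_le_one_of_le {α ν : Measure Ω} [SigmaFinite ν] (hα : α ≤ ν) :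
    α.rnDeriv ν ≤ᵐ[ν] 1 := by
  refine ae_le_of_forall_setLIntegral_le_of_sigmaFinite (Measure.measurable_rnDeriv α ν)
    fun s _ _ => ?_
  calc ∫⁻ x in s, α.rnDeriv ν x ∂ν ≤ α s := Measure.setLIntegral_rnDeriv_le s
    _ ≤ ν s := hα s
    _ = ∫⁻ x in s, (1 : Ω → ℝ≥0∞) x ∂ν := by simp

lemma map_withDensity_comp (π : Measure Ω) {g : Ω → Ω'} (hg : Measurable g) {f : Ω' → ℝ≥0∞}
    (hf : Measurable f) : (π.withDensity (f ∘ g)).map g = (π.map g).withDensity f := by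
  ext s hs
  rw [Measure.map_apply hg hs, withDensity_apply _ (hg hs), withDensity_apply _ hs,
    setLIntegral_map hs hf hg]
  rfl

lemma exists_le_map_eq_of_le_map {π : Measure Ω} {g : Ω → Ω'} (hg : Measurable g)
    [SigmaFinite (π.map g)] {α : Measure Ω'} [SigmaFinite α] (hα : α ≤ π.map g) :
    ∃ π' ≤ π, π'.map g = α := by
  have hf : Measurable (α.rnDeriv (π.map g)) := Measure.measurable_rnDeriv _ _
  refine ⟨π.withDensity (α.rnDeriv (π.map g) ∘ g), ?_, ?_⟩
  · have hle : α.rnDeriv (π.map g) ∘ g ≤ᵐ[π] 1 :=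
      ae_of_ae_map hg.aemeasurable (rnDeriv_le_one_of_le hα)
    simpa only [withDensity_one] using withDensity_mono hle
  · rw [map_withDensity_comp π hg hf,
      Measure.withDensity_rnDeriv_eq _ _ (Measure.absolutelyContinuous_of_le hα)]

lemma ofReal_smul_le_of_le_rnDeriv {ν₁ ν₂ : Measure Ω} {c : ℝ}
    (h : ∀ᵐ x ∂ν₂, c ≤ (ν₁.rnDeriv ν₂ x).toReal) : ENNReal.ofReal c • ν₂ ≤ ν₁ := by
  have hle : (fun _ => ENNReal.ofReal c) ≤ᵐ[ν₂] ν₁.rnDeriv ν₂ :=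
    h.mono fun x hx => ENNReal.ofReal_le_of_le_toReal hx
  calc ENNReal.ofReal c • ν₂ = ν₂.withDensity fun _ => ENNReal.ofReal c :=
        (withDensity_const _).symm
    _ ≤ ν₂.withDensity (ν₁.rnDeriv ν₂) := withDensity_mono hle
    _ ≤ ν₁ := Measure.withDensity_rnDeriv_le ν₁ ν₂

end Minorant

/-- `IsCoupling π μ ν` says that `π` is a transport plan from `μ` to `ν`: a measure on the product
with these two marginals, as in the definition of `W1`. The total mass is arbitrary, so that
couplings can be added. -/
structure IsCoupling {Ω Ω' : Type*} [MeasurableSpace Ω] [MeasurableSpace Ω']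
    (π : Measure (Ω × Ω')) (μ : Measure Ω) (ν : Measure Ω') : Prop where
  fst_eq : π.fst = μ
  snd_eq : π.snd = ν

namespace IsCoupling

variable {Ω Ω' : Type*} [MeasurableSpace Ω] [MeasurableSpace Ω'] {π π₁ π₂ : Measure (Ω × Ω')}
  {μ μ₁ μ₂ : Measure Ω} {ν ν₁ ν₂ : Measure Ω'}

lemma prod (μ : Measure Ω) (ν : Measure Ω') [IsProbabilityMeasure μ] [IsProbabilityMeasure ν] :
    IsCoupling (μ.prod ν) μ ν :=
  ⟨Measure.fst_prod, Measure.snd_prod⟩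

lemma add (h₁ : IsCoupling π₁ μ₁ ν₁) (h₂ : IsCoupling π₂ μ₂ ν₂) :
    IsCoupling (π₁ + π₂) (μ₁ + μ₂) (ν₁ + ν₂) :=
  ⟨by rw [Measure.fst_add, h₁.fst_eq, h₂.fst_eq], by rw [Measure.snd_add, h₁.snd_eq, h₂.snd_eq]⟩

lemma measure_univ_eq (h : IsCoupling π μ ν) : π univ = μ univ := by
  rw [← h.fst_eq, Measure.fst_univ]

lemma isProbabilityMeasure [IsProbabilityMeasure μ] (h : IsCoupling π μ ν) :
    IsProbabilityMeasure π :=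
  ⟨h.measure_univ_eq.trans measure_univ⟩

end IsCoupling

section Transport

variable {X : Type*} [PseudoMetricSpace X] [SecondCountableTopology X] [MeasurableSpace X]
  [OpensMeasurableSpace X] {S : Set X}

lemma lintegral_edist_prod_le (π : Measure (X × X)) (ρ : Measure X) [SFinite ρ]
    (hπ : ∀ᵐ x ∂π.snd, x ∈ S) (hρ : ∀ᵐ x ∂ρ, x ∈ S) :
    ∫⁻ p, edist p.1 p.2 ∂(π.fst.prod ρ) ≤
      (∫⁻ p, edist p.1 p.2 ∂π + Metric.ediam S * π univ) * ρ univ := by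
  have hedist : Measurable fun p : X × X => edist p.1 p.2 := measurable_edist
  have hπS : ∀ᵐ p ∂π, p.2 ∈ S := ae_of_ae_map measurable_snd.aemeasurable hπ
  calc ∫⁻ p, edist p.1 p.2 ∂(π.fst.prod ρ) = ∫⁻ p, ∫⁻ z, edist p.1 z ∂ρ ∂π := by
        rw [lintegral_prod _ hedist.aemeasurable, Measure.fst,
          lintegral_map hedist.lintegral_prod_right' measurable_fst]
    _ ≤ ∫⁻ p, (edist p.1 p.2 + Metric.ediam S) * ρ univ ∂π := by
        refine lintegral_mono_ae (hπS.mono fun p hp => ?_)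
        rw [← lintegral_const]
        refine lintegral_mono_ae (hρ.mono fun z hz => ?_)
        exact (edist_triangle _ p.2 _).trans (by gcongr; exact Metric.edist_le_ediam_of_mem hp hz)
    _ = (∫⁻ p, edist p.1 p.2 ∂π + Metric.ediam S * π univ) * ρ univ := by
        rw [lintegral_mul_const _ (hedist.add_const _), lintegral_add_left hedist, lintegral_const]

lemma exists_isCoupling_lintegral_edist_le (π : Measure (X × X)) [IsFiniteMeasure π]
    (ρ : Measure X) [SFinite ρ] (hmass : ρ univ = π univ) (hπ : ∀ᵐ x ∂π.snd, x ∈ S)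
    (hρ : ∀ᵐ x ∂ρ, x ∈ S) :
    ∃ π', IsCoupling π' π.fst ρ ∧
      ∫⁻ p, edist p.1 p.2 ∂π' ≤ ∫⁻ p, edist p.1 p.2 ∂π + Metric.ediam S * π univ := by
  rcases eq_or_ne π 0 with rfl | hπ0
  · obtain rfl : ρ = 0 := Measure.measure_univ_eq_zero.1 (by simpa using hmass)
    exact ⟨0, ⟨rfl, Measure.snd_zero⟩, le_self_add⟩
  have hinv : (π univ)⁻¹ * π univ = 1 :=
    ENNReal.inv_mul_cancel (Measure.measure_univ_ne_zero.2 hπ0) (measure_ne_top π univ)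
  refine ⟨(π univ)⁻¹ • π.fst.prod ρ, ⟨?_, ?_⟩, ?_⟩
  · rw [Measure.fst, Measure.map_smul, Measure.map_fst_prod, hmass, smul_smul, hinv, one_smul]
  · rw [Measure.snd, Measure.map_smul, Measure.map_snd_prod, Measure.fst_univ, smul_smul, hinv,
      one_smul]
  · calc ∫⁻ p, edist p.1 p.2 ∂((π univ)⁻¹ • π.fst.prod ρ)
        = (π univ)⁻¹ * ∫⁻ p, edist p.1 p.2 ∂(π.fst.prod ρ) := by
          rw [lintegral_smul_measure, smul_eq_mul]
      _ ≤ (π univ)⁻¹ * ((∫⁻ p, edist p.1 p.2 ∂π + Metric.ediam S * π univ) * π univ) := by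
          gcongr
          exact hmass ▸ lintegral_edist_prod_le π ρ hπ hρ
      _ = ∫⁻ p, edist p.1 p.2 ∂π + Metric.ediam S * π univ := by
          rw [mul_left_comm, hinv, mul_one]

lemma IsCoupling.exists_of_common_minorant {π : Measure (X × X)} [IsFiniteMeasure π]
    {μ ν₁ ν₂ α : Measure X} [IsFiniteMeasure ν₂] (h : IsCoupling π μ ν₁)
    (hα₁ : α ≤ ν₁) (hα₂ : α ≤ ν₂) (hmass : ν₁ univ = ν₂ univ)
    (hν₁ : ∀ᵐ x ∂ν₁, x ∈ S) (hν₂ : ∀ᵐ x ∂ν₂, x ∈ S) :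
    ∃ π', IsCoupling π' μ ν₂ ∧ ∫⁻ p, edist p.1 p.2 ∂π' ≤
      ∫⁻ p, edist p.1 p.2 ∂π + Metric.ediam S * (ν₂ univ - α univ) := by
  have : IsFiniteMeasure α := isFiniteMeasure_of_le ν₂ hα₂
  obtain ⟨π₀, hπ₀, hsnd : π₀.snd = α⟩ :=
    exists_le_map_eq_of_le_map measurable_snd (h.snd_eq.symm ▸ hα₁ : α ≤ π.snd)
  have : IsFiniteMeasure π₀ := isFiniteMeasure_of_le π hπ₀
  have hπ : π₀ + (π - π₀) = π := by rw [add_comm, Measure.sub_add_cancel_of_le hπ₀]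
  have hν : α + (ν₂ - α) = ν₂ := by rw [add_comm, Measure.sub_add_cancel_of_le hα₂]
  have hrest : (π - π₀) univ = ν₂ univ - α univ := by
    rw [Measure.sub_apply .univ hπ₀, ← hmass, ← h.snd_eq, ← hsnd, Measure.snd_univ,
      Measure.snd_univ]
  obtain ⟨π₁, hπ₁, hcost⟩ := exists_isCoupling_lintegral_edist_le (S := S) (π - π₀) (ν₂ - α)
    (by rw [hrest, Measure.sub_apply .univ hα₂])
    (ae_mono (Measure.snd_mono Measure.sub_le) (h.snd_eq.symm ▸ hν₁))
    (ae_mono Measure.sub_le hν₂)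
  refine ⟨π₀ + π₁, ?_, ?_⟩
  · have hadd := (IsCoupling.mk rfl hsnd).add hπ₁
    rwa [hν, ← Measure.fst_add, hπ, h.fst_eq] at hadd
  · calc ∫⁻ p, edist p.1 p.2 ∂(π₀ + π₁)
        ≤ ∫⁻ p, edist p.1 p.2 ∂π₀ +
            (∫⁻ p, edist p.1 p.2 ∂(π - π₀) + Metric.ediam S * (π - π₀) univ) := by
          rw [lintegral_add_measure]
          gcongr
      _ = ∫⁻ p, edist p.1 p.2 ∂π + Metric.ediam S * (ν₂ univ - α univ) := by
          rw [← add_assoc, ← lintegral_add_measure, hπ, hrest]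

end Transport

section FirstMoment

variable {X : Type*} [PseudoMetricSpace X] [MeasurableSpace X] [OpensMeasurableSpace X]

lemma integrable_dist_of_ae_mem_isBounded {ν : Measure X} [IsFiniteMeasure ν] {S : Set X}
    (hS : Bornology.IsBounded S) (hν : ∀ᵐ x ∂ν, x ∈ S) (x₀ : X) :
    Integrable (fun x => dist x₀ x) ν := by
  obtain ⟨r, hr⟩ := hS.subset_closedBall x₀
  have hdist : Continuous fun x => dist x₀ x := continuous_const.dist continuous_id
  refine Integrable.of_bound hdist.aestronglyMeasurable r (hν.mono fun x hx => ?_)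
  rw [Real.norm_of_nonneg dist_nonneg, dist_comm]
  exact hr hx

variable [SecondCountableTopology X]

lemma integral_dist_eq_toReal_lintegral_edist (π : Measure (X × X)) :
    ∫ p, dist p.1 p.2 ∂π = (∫⁻ p, edist p.1 p.2 ∂π).toReal := by
  simp only [dist_edist]
  exact integral_toReal measurable_edist.aemeasurable (ae_of_all _ fun _ => edist_lt_top _ _)

lemma IsCoupling.integrable_dist {π : Measure (X × X)} {μ ν : Measure X} (h : IsCoupling π μ ν)
    {x₀ : X} (hμ : Integrable (fun x => dist x₀ x) μ) (hν : Integrable (fun x => dist x₀ x) ν) :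
    Integrable (fun p : X × X => dist p.1 p.2) π := by
  obtain ⟨rfl, rfl⟩ := h
  refine ((hμ.comp_measurable measurable_fst).add (hν.comp_measurable measurable_snd)).mono'
    measurable_dist.aestronglyMeasurable (ae_of_all _ fun p => ?_)
  rw [Real.norm_of_nonneg dist_nonneg]
  exact dist_triangle_left p.1 p.2 x₀

end FirstMoment

section Wasserstein

section Basic

variable {X : Type*} [PseudoMetricSpace X] [MeasurableSpace X] {μ ν : Measure X}

lemma IsCoupling.W1_le [IsProbabilityMeasure μ] {π : Measure (X × X)} (h : IsCoupling π μ ν) :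
    W1 μ ν ≤ ∫ p, dist p.1 p.2 ∂π := by
  refine csInf_le ⟨0, ?_⟩ ⟨π, h.isProbabilityMeasure, h.fst_eq, h.snd_eq, rfl⟩
  rintro _ ⟨_, _, _, _, rfl⟩
  exact integral_nonneg fun _ => dist_nonneg

lemma le_W1 [IsProbabilityMeasure μ] [IsProbabilityMeasure ν] {c : ℝ}
    (hc : ∀ π, IsCoupling π μ ν → c ≤ ∫ p, dist p.1 p.2 ∂π) : c ≤ W1 μ ν := by
  have hprod := IsCoupling.prod μ ν
  refine le_csInf ⟨_, μ.prod ν, inferInstance, hprod.fst_eq, hprod.snd_eq, rfl⟩ ?_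
  rintro _ ⟨π, _, hfst, hsnd, rfl⟩
  exact hc π ⟨hfst, hsnd⟩

end Basic

variable {X : Type*} [PseudoMetricSpace X] [SecondCountableTopology X] [MeasurableSpace X]
  [OpensMeasurableSpace X] {μ ν₁ ν₂ α : Measure X} [IsProbabilityMeasure μ]
  [IsProbabilityMeasure ν₁] [IsProbabilityMeasure ν₂] {S : Set X} {x₀ : X}

lemma W1_le_W1_add_of_common_minorant (hα₁ : α ≤ ν₁) (hα₂ : α ≤ ν₂) (hS : Bornology.IsBounded S)
    (hν₁ : ∀ᵐ x ∂ν₁, x ∈ S) (hν₂ : ∀ᵐ x ∂ν₂, x ∈ S) (hμ : Integrable (fun x => dist x₀ x) μ) :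
    W1 μ ν₂ ≤ W1 μ ν₁ + Metric.diam S * (1 - α.real univ) := by
  rw [← sub_le_iff_le_add]
  refine le_W1 fun π hπ => sub_le_iff_le_add.2 ?_
  have := hπ.isProbabilityMeasure
  obtain ⟨π', hπ', hcost⟩ := hπ.exists_of_common_minorant hα₁ hα₂ (by simp) hν₁ hν₂
  have hfinite : ∫⁻ p, edist p.1 p.2 ∂π ≠ ∞ := by
    simpa only [edist_dist] using (hπ.integrable_dist hμ
      (integrable_dist_of_ae_mem_isBounded hS hν₁ x₀)).lintegral_lt_top.ne
  have hextra : Metric.ediam S * (1 - α univ) ≠ ∞ :=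
    ENNReal.mul_ne_top hS.ediam_ne_top (by finiteness)
  have hα : α univ ≤ 1 := (hα₁ univ).trans_eq measure_univ
  calc W1 μ ν₂ ≤ ∫ p, dist p.1 p.2 ∂π' := hπ'.W1_le
    _ = (∫⁻ p, edist p.1 p.2 ∂π').toReal := integral_dist_eq_toReal_lintegral_edist π'
    _ ≤ (∫⁻ p, edist p.1 p.2 ∂π + Metric.ediam S * (1 - α univ)).toReal := by
        rw [measure_univ] at hcost
        exact ENNReal.toReal_mono (ENNReal.add_ne_top.2 ⟨hfinite, hextra⟩) hcost
    _ = ∫ p, dist p.1 p.2 ∂π + Metric.diam S * (1 - α.real univ) := by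
        rw [ENNReal.toReal_add hfinite hextra, ENNReal.toReal_mul,
          ENNReal.toReal_sub_of_le hα ENNReal.one_ne_top, ENNReal.toReal_one,
          integral_dist_eq_toReal_lintegral_edist]
        rfl

lemma abs_W1_sub_W1_le_of_common_minorant (hα₁ : α ≤ ν₁) (hα₂ : α ≤ ν₂)
    (hS : Bornology.IsBounded S) (hν₁ : ∀ᵐ x ∂ν₁, x ∈ S) (hν₂ : ∀ᵐ x ∂ν₂, x ∈ S)
    (hμ : Integrable (fun x => dist x₀ x) μ) :
    |W1 μ ν₁ - W1 μ ν₂| ≤ Metric.diam S * (1 - α.real univ) :=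
  abs_sub_le_iff.2
    ⟨sub_le_iff_le_add'.2 (W1_le_W1_add_of_common_minorant hα₂ hα₁ hS hν₂ hν₁ hμ),
      sub_le_iff_le_add'.2 (W1_le_W1_add_of_common_minorant hα₁ hα₂ hS hν₁ hν₂ hμ)⟩

lemma abs_W1_sub_W1_le_of_le_rnDeriv {ε : ℝ}
    (hε : ∀ᵐ x ∂ν₂, 1 - ε ≤ (ν₁.rnDeriv ν₂ x).toReal) (hS : Bornology.IsBounded S)
    (hν₁ : ∀ᵐ x ∂ν₁, x ∈ S) (hν₂ : ∀ᵐ x ∂ν₂, x ∈ S) (hμ : Integrable (fun x => dist x₀ x) μ) :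
    |W1 μ ν₁ - W1 μ ν₂| ≤ Metric.diam S * ε := by
  set c := ENNReal.ofReal (1 - ε)
  have hα₁ : c • ν₂ ≤ ν₁ := ofReal_smul_le_of_le_rnDeriv hε
  have hc : c ≤ 1 := by simpa using hα₁ univ
  have hα₂ : c • ν₂ ≤ ν₂ := fun s => by simpa using mul_le_of_le_one_left' hc
  have hmass : 1 - (c • ν₂).real univ ≤ ε := by
    have : 1 - ε ≤ c.toReal := Real.le_coe_toNNReal _
    simp only [measureReal_ennreal_smul_apply, probReal_univ, mul_one]
    linarith
  exact (abs_W1_sub_W1_le_of_common_minorant hα₁ hα₂ hS hν₁ hν₂ hμ).trans (by gcongr)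

end Wasserstein

lemma ae_mem_msupport {X : Type*} [TopologicalSpace X] [HereditarilyLindelofSpace X]
    [MeasurableSpace X] (μ : Measure X) : ∀ᵐ x ∂μ, x ∈ msupport μ := by
  have hsupport : msupport μ = μ.support := ext fun _ => (Measure.mem_support_iff_forall _).symm
  rw [hsupport]
  exact Measure.support_mem_ae

theorem w1_distance_approximation_general
    {X : Type*} [PseudoMetricSpace X] [TopologicalSpace.SeparableSpace X]
    [MeasurableSpace X] [OpensMeasurableSpace X]
    {k l δ₀ C₁ C₂ : ℝ} (hC₁ : 0 ≤ C₁) (hC₂ : 0 ≤ C₂) {μ₁ μ₂ : ℝ → Measure X}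
    (hprob₁ : ∀ δ ∈ Ioc 0 δ₀, IsProbabilityMeasure (μ₁ δ))
    (hprob₂ : ∀ δ ∈ Ioc 0 δ₀, IsProbabilityMeasure (μ₂ δ))
    (hdiam : ∀ δ ∈ Ioc 0 δ₀, Metric.ediam (msupport (μ₂ δ)) ≤ ENNReal.ofReal (C₁ * δ ^ l))
    (hac : ∀ δ ∈ Ioc 0 δ₀, μ₁ δ ≪ μ₂ δ)
    (hrn : ∀ δ ∈ Ioc 0 δ₀, ∀ᵐ x ∂(μ₂ δ), 1 - C₂ * δ ^ k ≤ ((μ₁ δ).rnDeriv (μ₂ δ) x).toReal)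
    {δ : ℝ} (hδ : δ ∈ Ioc 0 δ₀) {μ : Measure X} [IsProbabilityMeasure μ] {x₀ : X}
    (hμ : Integrable (fun x => dist x₀ x) μ) :
    |W1 μ (μ₁ δ) - W1 μ (μ₂ δ)| ≤ C₁ * C₂ * δ ^ (k + l) := by
  have hδ_pos : 0 < δ := hδ.1
  have := UniformSpace.secondCountable_of_separable X
  have := hprob₁ δ hδ
  have := hprob₂ δ hδ
  have hν₂ := ae_mem_msupport (μ₂ δ)
  have hbounded : Bornology.IsBounded (msupport (μ₂ δ)) :=
    Metric.isBounded_iff_ediam_ne_top.2 ((hdiam δ hδ).trans_lt ENNReal.ofReal_lt_top).ne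
  calc |W1 μ (μ₁ δ) - W1 μ (μ₂ δ)| ≤ Metric.diam (msupport (μ₂ δ)) * (C₂ * δ ^ k) :=
        abs_W1_sub_W1_le_of_le_rnDeriv (hrn δ hδ) hbounded ((hac δ hδ).ae_le hν₂) hν₂ hμ
    _ ≤ C₁ * δ ^ l * (C₂ * δ ^ k) := by
        gcongr
        exact ENNReal.toReal_le_of_le_ofReal (by positivity) (hdiam δ hδ)
    _ = C₁ * C₂ * δ ^ (k + l) := by
        rw [Real.rpow_add hδ_pos]
        ring

/-- `W₁` distance approximation: if `μ₁^δ ≪ μ₂^δ` with density `1 + O(δ^k)` and the support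
of `μ₂^δ` has diameter `O(δ^ℓ)`, then `|W₁(μ, μ₁^δ) − W₁(μ, μ₂^δ)| = O(δ^{k+ℓ})`, uniformly
over probability measures `μ` with finite first moment. -/
theorem w1_distance_approximation
    {X : Type*} [MetricSpace X] [CompleteSpace X] [TopologicalSpace.SeparableSpace X]
    [MeasurableSpace X] [BorelSpace X]
    (k l δ₀ : ℝ) (hk : 0 < k) (hl : 0 < l) (hδ₀ : 0 < δ₀)
    (C₁ C₂ : ℝ) (hC₁ : 0 ≤ C₁) (hC₂ : 0 ≤ C₂)
    (μ₁ μ₂ : ℝ → Measure X)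
    (hprob₁ : ∀ δ ∈ Ioc (0:ℝ) δ₀, IsProbabilityMeasure (μ₁ δ))
    (hprob₂ : ∀ δ ∈ Ioc (0:ℝ) δ₀, IsProbabilityMeasure (μ₂ δ))
    (hsupp : ∀ δ ∈ Ioc (0:ℝ) δ₀, (msupport (μ₂ δ)).Nonempty ∧
      EMetric.diam (msupport (μ₂ δ)) ≤ ENNReal.ofReal (C₁ * δ ^ l))
    (hac : ∀ δ ∈ Ioc (0:ℝ) δ₀, μ₁ δ ≪ μ₂ δ)
    (hrn : ∀ δ ∈ Ioc (0:ℝ) δ₀,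
      ∀ᵐ x ∂(μ₂ δ), |((μ₁ δ).rnDeriv (μ₂ δ) x).toReal - 1| ≤ C₂ * δ ^ k) :
    ∃ C > (0:ℝ), ∀ δ ∈ Ioc (0:ℝ) δ₀, ∀ μ : Measure X, IsProbabilityMeasure μ →
      (∃ x₀ : X, Integrable (fun x => dist x₀ x) μ) →
      |W1 μ (μ₁ δ) - W1 μ (μ₂ δ)| ≤ C * δ ^ (k + l) := by
  refine ⟨C₁ * C₂ + 1, by positivity, fun δ hδ μ _ ⟨_, hμ⟩ => ?_⟩
  have hδ_pos : 0 < δ := hδ.1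
  exact (w1_distance_approximation_general hC₁ hC₂ hprob₁ hprob₂ (fun δ hδ => (hsupp δ hδ).2) hac
    (fun δ hδ => (hrn δ hδ).mono fun _ hx => by linarith [(abs_le.1 hx).1]) hδ hμ).trans
    (by gcongr; linarith)
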